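/- Let P(σ) : K → R be holomorphic near σ₀, invertible for σ ≠ σ₀, with P(σ₀) = 0, where dim K = dim R = d. Then one can choose ψ₁,…,ψ_d ∈ 𝔐_{σ₀}(K) with P·ψ_j holomorphic, the values (P·ψ_j)(σ₀) a basis of R, and such that, writing ψ_j = Σ_{ℓ=0}^{μ_j−1} (σ−σ₀)^{ℓ−μ_j} ψ_{jℓ} + (holomorphic), the leading coefficients ψ_{1,0},…,ψ_{d,0} are linearly independent in K. -/

import Mathlib

lemma analyticAt_clm_apply_aux {K R : Type*} [NormedAddCommGroup K] [NormedSpace ℂ K]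
    [NormedAddCommGroup R] [NormedSpace ℂ R] {σ₀ : ℂ} {P : ℂ → (K →L[ℂ] R)} {f : ℂ → K}
    (hP : AnalyticAt ℂ P σ₀) (hf : AnalyticAt ℂ f σ₀) :
    AnalyticAt ℂ (fun σ => P σ (f σ)) σ₀ :=
  AnalyticAt.comp₂ (h := fun x : (K →L[ℂ] R) × K => x.1 x.2)
    ((ContinuousLinearMap.id ℂ (K →L[ℂ] R)).analyticAt_bilinear (P σ₀, f σ₀)) hP hf

open Filter Topology in
lemma taylor_aux {K : Type*} [NormedAddCommGroup K] [NormedSpace ℂ K] (σ₀ : ℂ) (n : ℕ) :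
    ∀ f : ℂ → K, AnalyticAt ℂ f σ₀ → ∃ (c : ℕ → K) (h : ℂ → K), AnalyticAt ℂ h σ₀ ∧ c 0 = f σ₀ ∧
      ∀ σ, f σ = (∑ ℓ ∈ Finset.range n, (σ - σ₀) ^ ℓ • c ℓ) + (σ - σ₀) ^ n • h σ := by
  induction n with
  | zero => 
    intro f hf
    exact ⟨fun _ => f σ₀, f, hf, rfl, by simp⟩
  | succ n ih =>
    intro f hf
    have hg : AnalyticAt ℂ (dslope f σ₀) σ₀ := by
      obtain ⟨p, hp⟩ := hf
      exact ⟨_, hp.has_fpower_series_dslope_fslope⟩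
    obtain ⟨c, h, hh, -, hs⟩ := ih _ hg
    refine ⟨fun k => Nat.casesOn k (f σ₀) c, h, hh, rfl, fun σ => ?_⟩
    have h1 := sub_smul_dslope f σ₀ σ
    rw [hs σ] at h1
    rw [Finset.sum_range_succ']
    simp only [pow_succ', mul_smul, pow_zero, one_smul]
    rw [← Finset.smul_sum]
    rw [smul_add] at h1
    rw [add_right_comm, h1]
    change f σ = f σ - f σ₀ + f σ₀
    abel

/-- The admissible data. -/
def Adm {K R : Type*} [NormedAddCommGroup K] [NormedSpace ℂ K]
    [NormedAddCommGroup R] [NormedSpace ℂ R] {d : ℕ} (σ₀ : ℂ) (P : ℂ → (K →L[ℂ] R))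
    (φ : Fin d → ℂ → K) (β : Fin d → ℂ → R) (μ : Fin d → ℕ) : Prop :=
  (∀ j, AnalyticAt ℂ (φ j) σ₀) ∧ (∀ j, AnalyticAt ℂ (β j) σ₀) ∧
  LinearIndependent ℂ (fun j => β j σ₀) ∧
  ∀ j, ∀ᶠ σ in nhdsWithin σ₀ {σ₀}ᶜ, P σ (φ j σ) = (σ - σ₀) ^ μ j • β j σ

open Filter Topology in
lemma Adm.pos {K R : Type*} [NormedAddCommGroup K] [NormedSpace ℂ K]
    [NormedAddCommGroup R] [NormedSpace ℂ R] {d : ℕ} {σ₀ : ℂ} {P : ℂ → (K →L[ℂ] R)}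
    {φ : Fin d → ℂ → K} {β : Fin d → ℂ → R} {μ : Fin d → ℕ} (h : Adm σ₀ P φ β μ)
    (hP : AnalyticAt ℂ P σ₀) (hzero : P σ₀ = 0) (j : Fin d) : 0 < μ j := by
  obtain ⟨h1, h2, h3, h4⟩ := h
  by_contra hc
  have hc : μ j = 0 := by omega
  have h5 := h4 j
  simp only [hc, pow_zero, one_smul] at h5
  have hA : AnalyticAt ℂ (fun σ => P σ (φ j σ)) σ₀ := analyticAt_clm_apply_aux hP (h1 j)
  have h6 := ((hA.continuousAt.eventuallyEq_nhds_iff_eventuallyEq_nhdsNE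
    (h2 j).continuousAt).1 h5).eq_of_nhds
  simp only [hzero] at h6
  exact h3.ne_zero j (by simpa using h6.symm)

open Filter Topology in
lemma Adm.improve {K R : Type*} [NormedAddCommGroup K] [NormedSpace ℂ K]
    [NormedAddCommGroup R] [NormedSpace ℂ R] {d : ℕ} {σ₀ : ℂ} {P : ℂ → (K →L[ℂ] R)}
    (hP : AnalyticAt ℂ P σ₀) (hzero : P σ₀ = 0) (N : ℕ) :
    ∀ (φ : Fin d → ℂ → K) (β : Fin d → ℂ → R) (μ : Fin d → ℕ), Adm σ₀ P φ β μ → ∑ j, μ j = N →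
    ∃ (φ : Fin d → ℂ → K) (β : Fin d → ℂ → R) (μ : Fin d → ℕ), Adm σ₀ P φ β μ ∧
      LinearIndependent ℂ (fun j => φ j σ₀) := by
  induction N using Nat.strong_induction_on with
  | _ N ih =>
  intro φ β μ hA hN
  by_cases hli : LinearIndependent ℂ (fun j => φ j σ₀)
  · exact ⟨φ, β, μ, hA, hli⟩
  have hpos := hA.pos hP hzero
  obtain ⟨h1, h2, h3, h4⟩ := hA
  rw [Fintype.not_linearIndependent_iff] at hli
  obtain ⟨a, ha, i, hi⟩ := hli
  obtain ⟨k, hk, hmin⟩ := Finset.exists_min_image (Finset.univ.filter fun j => a j ≠ 0) μ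
    ⟨i, by simpa using hi⟩
  simp only [Finset.mem_filter, Finset.mem_univ, true_and] at hk hmin
  set f : ℂ → K := fun σ => ∑ j, a j • φ j σ with hf
  have hfa : AnalyticAt ℂ f σ₀ := by
    apply Finset.analyticAt_fun_sum
    intro j _
    exact analyticAt_const.smul (h1 j)
  have hga : AnalyticAt ℂ (dslope f σ₀) σ₀ := by
    obtain ⟨p, hp⟩ := hfa
    exact ⟨_, hp.has_fpower_series_dslope_fslope⟩
  set b : ℂ → R := fun σ => ∑ j, (a j * (σ - σ₀) ^ (μ j - μ k)) • β j σ with hb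
  have hba : AnalyticAt ℂ b σ₀ := by
    apply Finset.analyticAt_fun_sum
    intro j _
    exact (analyticAt_const.mul ((analyticAt_id.sub analyticAt_const).pow _)).smul (h2 j)
  refine ih (∑ j, Function.update μ k (μ k - 1) j) ?_ (Function.update φ k (dslope f σ₀))
    (Function.update β k b) (Function.update μ k (μ k - 1)) ⟨?_, ?_, ?_, ?_⟩ rfl
  · rw [← hN]
    apply Finset.sum_lt_sum
    · intro j _
      by_cases hj : j = k
      · subst hj; simp
      · simp [hj]
    · exact ⟨k, Finset.mem_univ _, by have := hpos k; simp; omega⟩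
  · intro j
    by_cases hj : j = k
    · subst hj; simpa using hga
    · simpa [hj] using h1 j
  · intro j
    by_cases hj : j = k
    · subst hj; simpa using hba
    · simpa [hj] using h2 j
  · have : (fun j => Function.update β k b j σ₀) = Function.update (fun j => β j σ₀) k (b σ₀) := by
      ext j
      by_cases hj : j = k
      · subst hj; simp
      · simp [hj]
    rw [this]
    apply h3.update
    refine ⟨1, one_mem _, Finsupp.equivFunOnFinite.symm
      (fun j => a j * (σ₀ - σ₀) ^ (μ j - μ k)), ?_, ?_⟩
    · simpa using hk
    · simp [hb, Finsupp.linearCombination_apply, Finsupp.sum_fintype]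
  · intro j
    by_cases hj : j = k
    · subst hj
      simp only [Function.update_self]
      have hall : ∀ᶠ σ in nhdsWithin σ₀ {σ₀}ᶜ, ∀ i, P σ (φ i σ) = (σ - σ₀) ^ μ i • β i σ :=
        eventually_all.2 h4
      filter_upwards [hall, self_mem_nhdsWithin] with σ hσ hne
      have hne' : σ - σ₀ ≠ 0 := sub_ne_zero.2 hne
      have e1 := sub_smul_dslope f σ₀ σ
      have e0 : f σ₀ = 0 := ha
      rw [e0, sub_zero] at e1
      apply smul_right_injective R hne'
      simp only
      rw [← map_smul, e1, smul_smul, ← pow_succ', Nat.sub_add_cancel (hpos j)]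
      simp only [hf, hb, map_sum, map_smul, Finset.smul_sum, hσ, smul_smul]
      refine Finset.sum_congr rfl fun i _ => ?_
      by_cases hai : a i = 0
      · simp [hai]
      · have : μ i = μ j + (μ i - μ j) := by have := hmin i hai; omega
        rw [mul_left_comm, ← pow_add, ← this]
    · simpa [hj] using h4 j

open Filter Topology in
lemma Adm.exists_init {K R : Type*}
    [NormedAddCommGroup K] [NormedSpace ℂ K] [FiniteDimensional ℂ K]
    [NormedAddCommGroup R] [NormedSpace ℂ R] [FiniteDimensional ℂ R]
    (d : ℕ) (hK : Module.finrank ℂ K = d) (hR : Module.finrank ℂ R = d)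
    (σ₀ : ℂ) (P : ℂ → (K →L[ℂ] R)) (hP : AnalyticAt ℂ P σ₀)
    (hinv : ∀ᶠ σ in nhdsWithin σ₀ {σ₀}ᶜ, Function.Bijective (P σ)) :
    ∃ (φ : Fin d → ℂ → K) (β : Fin d → ℂ → R) (μ : Fin d → ℕ), Adm σ₀ P φ β μ := by
  let bK := Module.finBasisOfFinrankEq ℂ K hK
  let bR := Module.finBasisOfFinrankEq ℂ R hR
  let M : ℂ → Matrix (Fin d) (Fin d) ℂ := fun σ => LinearMap.toMatrix bK bR (P σ : K →ₗ[ℂ] R)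
  have hM : ∀ i j, AnalyticAt ℂ (fun σ => M σ i j) σ₀ := by
    intro i j
    have h1 : AnalyticAt ℂ (fun σ => P σ (bK j)) σ₀ := analyticAt_clm_apply_aux hP analyticAt_const
    have h2 := (LinearMap.toContinuousLinearMap (bR.coord i)).analyticAt (P σ₀ (bK j))
    have h3 := AnalyticAt.comp (f := fun σ => P σ (bK j)) h2 h1
    refine h3.congr (Eventually.of_forall fun σ => ?_)
    simp [M, LinearMap.toMatrix_apply]
  have hdet : ∀ A : ℂ → Matrix (Fin d) (Fin d) ℂ, (∀ i j, AnalyticAt ℂ (fun σ => A σ i j) σ₀) →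
      AnalyticAt ℂ (fun σ => (A σ).det) σ₀ := by
    intro A hA
    simp only [Matrix.det_apply']
    apply Finset.analyticAt_fun_sum
    intro s _
    exact analyticAt_const.mul (Finset.analyticAt_fun_prod _ fun i _ => hA _ _)
  have hadj : ∀ i j, AnalyticAt ℂ (fun σ => (M σ).adjugate i j) σ₀ := by
    intro i j
    simp only [Matrix.adjugate_apply]
    apply hdet
    intro i' j'
    by_cases h : i' = j
    · subst h; simpa using analyticAt_const
    · simpa [Matrix.updateRow_ne h] using hM i' j'
  have hne : ∀ᶠ σ in nhdsWithin σ₀ {σ₀}ᶜ, (M σ).det ≠ 0 := by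
    filter_upwards [hinv] with σ hσ
    exact ((LinearEquiv.ofBijective (P σ : K →ₗ[ℂ] R) hσ).isUnit_det bK bR).ne_zero
  have hnz : ¬ ∀ᶠ σ in 𝓝 σ₀, (M σ).det = 0 := by
    intro h
    obtain ⟨σ, h1, h2⟩ := (hne.and (h.filter_mono nhdsWithin_le_nhds)).exists
    exact h1 h2
  obtain ⟨n, g, hg, hg0, hgn⟩ := (hdet M hM).exists_eventuallyEq_pow_smul_nonzero_iff.2 hnz
  refine ⟨fun j σ => ∑ i, (M σ).adjugate i j • bK i, fun j σ => g σ • bR j, fun _ => n,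
    ?_, ?_, ?_, ?_⟩
  · intro j
    apply Finset.analyticAt_fun_sum
    intro i _
    exact (hadj i j).smul analyticAt_const
  · intro j
    exact hg.smul analyticAt_const
  · exact bR.linearIndependent.units_smul (fun _ => Units.mk0 _ hg0)
  · intro j
    filter_upwards [hgn.filter_mono nhdsWithin_le_nhds] with σ hσ
    rw [smul_smul, ← smul_eq_mul, ← hσ]
    have hP' : ∀ i, P σ (bK i) = ∑ k, M σ k i • bR k := by
      intro i
      rw [← bR.sum_repr (P σ (bK i))]
      simp [M, LinearMap.toMatrix_apply]
    have hmul : ∀ k, ∑ i, (M σ).adjugate i j * M σ k i = (M σ).det * (1 : Matrix _ _ ℂ) k j := by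
      intro k
      have := congrFun (congrFun (Matrix.mul_adjugate (M σ)) k) j
      rw [Matrix.mul_apply] at this
      simpa [mul_comm] using this
    simp only [map_sum, map_smul, hP', Finset.smul_sum, smul_smul]
    rw [Finset.sum_comm]
    simp only [← Finset.sum_smul, hmul]
    simp [Matrix.one_apply]

/-- Refined structure theorem (Lemma mero2): for `P(σ) : K → R` holomorphic near `σ₀`,
invertible off `σ₀`, with `P(σ₀) = 0`, one can choose `ψ₁,…,ψ_d` with `P·ψ_j = β_j`
holomorphic, `β_j(σ₀)` a basis of `R`, and such that in the Laurent expansions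
`ψ_j = Σ_{ℓ<μ_j} (σ−σ₀)^{ℓ−μ_j} ψ_{jℓ} + (holomorphic)` the leading coefficients
`ψ_{1,0},…,ψ_{d,0}` are linearly independent in `K`. -/
theorem stmt_7 {K R : Type*}
    [NormedAddCommGroup K] [NormedSpace ℂ K] [FiniteDimensional ℂ K]
    [NormedAddCommGroup R] [NormedSpace ℂ R] [FiniteDimensional ℂ R]
    (d : ℕ) (hd : 0 < d)
    (hK : Module.finrank ℂ K = d) (hR : Module.finrank ℂ R = d)
    (σ₀ : ℂ) (P : ℂ → (K →L[ℂ] R)) (hP : AnalyticAt ℂ P σ₀)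
    (hinv : ∀ᶠ σ in nhdsWithin σ₀ {σ₀}ᶜ, Function.Bijective (P σ))
    (hzero : P σ₀ = 0) :
    ∃ (ψ : Fin d → ℂ → K) (β : Fin d → ℂ → R) (μ : Fin d → ℕ)
      (c : Fin d → ℕ → K) (h : Fin d → ℂ → K),
      (∀ j, 0 < μ j) ∧
      (∀ j, AnalyticAt ℂ (β j) σ₀) ∧
      (∀ j, ∀ᶠ σ in nhdsWithin σ₀ {σ₀}ᶜ, β j σ = P σ (ψ j σ)) ∧
      LinearIndependent ℂ (fun j => β j σ₀) ∧
      (∀ j, AnalyticAt ℂ (h j) σ₀) ∧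
      (∀ j, ∀ᶠ σ in nhdsWithin σ₀ {σ₀}ᶜ,
        ψ j σ = (∑ ℓ ∈ Finset.range (μ j),
          ((σ - σ₀) ^ ((ℓ : ℤ) - (μ j : ℤ))) • c j ℓ) + h j σ) ∧
      LinearIndependent ℂ (fun j => c j 0) := by
  obtain ⟨φ₀, β₀, μ₀, h₀⟩ := Adm.exists_init d hK hR σ₀ P hP hinv
  obtain ⟨φ, β, μ, hA, hli⟩ := Adm.improve hP hzero _ φ₀ β₀ μ₀ h₀ rfl
  have hpos := hA.pos hP hzero
  obtain ⟨h1, h2, h3, h4⟩ := hA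
  choose c h hh hc hs using fun j => taylor_aux σ₀ (μ j) (φ j) (h1 j)
  refine ⟨fun j σ => (σ - σ₀) ^ (-(μ j : ℤ)) • φ j σ, β, μ, c, h, hpos, h2, ?_, h3, hh, ?_, ?_⟩
  · intro j
    filter_upwards [h4 j, self_mem_nhdsWithin] with σ hσ hne
    have hne' : σ - σ₀ ≠ 0 := sub_ne_zero.2 hne
    rw [map_smul, hσ, smul_smul, zpow_neg, zpow_natCast, inv_mul_cancel₀ (pow_ne_zero _ hne'),
      one_smul]
  · intro j
    filter_upwards [self_mem_nhdsWithin] with σ hne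
    have hne' : σ - σ₀ ≠ 0 := sub_ne_zero.2 hne
    rw [hs j σ, smul_add, smul_smul, zpow_neg, zpow_natCast,
      inv_mul_cancel₀ (pow_ne_zero _ hne'), one_smul, Finset.smul_sum]
    congr 1
    refine Finset.sum_congr rfl fun l _ => ?_
    rw [smul_smul, zpow_sub₀ hne', zpow_natCast, zpow_natCast, div_eq_inv_mul]
  · simpa only [hc] using hli
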